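/- Let F be a field of characteristic 0 and L a finite-dimensional pluperfect Lie algebra over F. Then L is inertially generated: L admits an F-basis consisting of inertial elements. -/

import Mathlib

/-- A Lie algebra `L` over a field `F` is *toral* if for every `x ∈ L` the adjoint
endomorphism `ad x : L → L`, `y ↦ ⁅x, y⁆`, is semisimple, i.e. every `ad x`-invariant
`F`-subspace of `L` has an `ad x`-invariant complement. -/
def IsToral (F L : Type*) [Field F] [LieRing L] [LieAlgebra F L] : Prop :=
  ∀ x : L, ∀ p : Submodule F L, (∀ y ∈ p, ⁅x, y⁆ ∈ p) →
    ∃ q : Submodule F L, (∀ y ∈ q, ⁅x, y⁆ ∈ q) ∧ IsCompl p q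

/-- A Lie algebra `L` is *pluperfect* if every toral quotient of `L` is trivial:
for every Lie ideal `I` with `L ⧸ I` toral, one has `I = ⊤`. -/
def IsPluperfect (F L : Type*) [Field F] [LieRing L] [LieAlgebra F L] : Prop :=
  ∀ I : LieIdeal F L, IsToral F (L ⧸ I) → I = ⊤

/-- A nonzero element `y` of a Lie algebra `L` over `F` is *inertial* if there are
`x ∈ L` and a nonzero scalar `c ∈ F` with `⁅x, y⁆ = c • y`. -/
def IsInertial (F : Type*) {L : Type*} [Field F] [LieRing L] [LieAlgebra F L] (y : L) :
    Prop :=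
  y ≠ 0 ∧ ∃ (x : L) (c : F), c ≠ 0 ∧ ⁅x, y⁆ = c • y

/-- A Lie algebra is *inertially generated* if it admits an `F`-basis all of whose
elements are inertial. -/
def InertiallyGenerated (F L : Type*) [Field F] [LieRing L] [LieAlgebra F L] : Prop :=
  ∃ (n : ℕ) (b : Module.Basis (Fin n) F L), ∀ i, IsInertial F (b i)

set_option linter.unusedSectionVars false
section LinAlg
variable {K M : Type*} [Field K] [CharZero K] [AddCommGroup M] [Module K M]
  {E G H : Module.End K M}

lemma pl_H_pow (hHE : ∀ v, H (E v) = E (H v) + (2:K) • E v) (m : ℕ) (v : M) :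
    H ((E ^ m) v) = (E ^ m) (H v) + (2 * m : K) • (E ^ m) v := by
  induction m with
  | zero => simp
  | succ m ih =>
    rw [pow_succ', Module.End.mul_apply, hHE, ih, Module.End.mul_apply, map_add, map_smul]
    push_cast
    module

lemma pl_nilp [FiniteDimensional K M] (hHE : ∀ v, H (E v) = E (H v) + (2:K) • E v) :
    IsNilpotent E := by
  by_contra hE
  have hE' : ∀ m, E ^ m ≠ 0 := fun m hm => hE ⟨m, hm⟩
  let T : Module.End K (Module.End K M) := LinearMap.mulLeft K H - LinearMap.mulRight K H
  have hT : ∀ m : ℕ, T.HasEigenvalue (2 * m : K) := by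
    intro m
    refine Module.End.hasEigenvalue_of_hasEigenvector (x := E ^ m) ⟨?_, hE' m⟩
    rw [Module.End.mem_eigenspace_iff]
    ext v
    simp [T, pl_H_pow hHE m v]
  have hfin := T.finite_hasEigenvalue
  have : (Set.range fun m : ℕ => (2 * m : K)).Finite := hfin.subset (by rintro _ ⟨m, rfl⟩; exact hT m)
  exact Set.infinite_range_of_injective (fun a b h => by simpa using h) this

lemma pl_comm_pow (hHE : ∀ v, H (E v) = E (H v) + (2:K) • E v)
    (hEG : ∀ v, E (G v) = G (E v) + H v) (m : ℕ) (v : M) :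
    (E ^ (m+1)) (G v) = G ((E ^ (m+1)) v) + ((m + 1 : K)) • (H ((E^m) v) - (m:K) • (E^m) v) := by
  induction m generalizing v with
  | zero => simp [hEG]
  | succ m ih =>
    have h1 : ∀ w, (E ^ (m+1+1)) w = (E^(m+1)) (E w) := fun w => by
      rw [pow_succ, Module.End.mul_apply]
    rw [h1, hEG, map_add, ih, h1, pl_H_pow hHE m, pl_H_pow hHE (m+1)]
    have h2 : ∀ w, (E^m) (E w) = (E^(m+1)) w := fun w => by
      rw [pow_succ, Module.End.mul_apply]
    have h3 : H (E v) = E (H v) + (2:K) • E v := hHE v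
    rw [h3, map_add, map_smul, h2, h2]
    push_cast
    module

/-- key step -/
lemma pl_step (hHE : ∀ v, H (E v) = E (H v) + (2:K) • E v)
    (hEG : ∀ v, E (G v) = G (E v) + H v) (m : ℕ) (a b : M) (hb : E b = 0) (hab : (E^m) a = b) :
    ∃ a', (E^(m+1)) a' = H b - (m:K) • b := by
  have h := pl_comm_pow hHE hEG m a
  have h0 : (E^(m+1)) a = 0 := by rw [pow_succ', Module.End.mul_apply, hab, hb]
  rw [h0, map_zero, zero_add, hab] at h
  refine ⟨((m+1 : K))⁻¹ • G a, ?_⟩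
  rw [map_smul, h, smul_smul, inv_mul_cancel₀, one_smul]
  exact_mod_cast Nat.succ_ne_zero m

lemma pl_inj (hHE : ∀ v, H (E v) = E (H v) + (2:K) • E v)
    (hEG : ∀ v, E (G v) = G (E v) + H v) (hE : IsNilpotent E) (b : M) (hb : E b = 0)
    (hb2 : H b + (2:K) • b = 0) : b = 0 := by
  obtain ⟨N, hN⟩ := hE
  have : ∀ m, ∃ a, (E^m) a = b := by
    intro m
    induction m with
    | zero => exact ⟨b, by simp⟩
    | succ m ih =>
      obtain ⟨a, ha⟩ := ih
      obtain ⟨a', ha'⟩ := pl_step hHE hEG m a b hb ha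
      have hm : (m + 2 : K) ≠ 0 := by exact_mod_cast Nat.succ_ne_zero (m+1)
      refine ⟨-(m+2 : K)⁻¹ • a', ?_⟩
      rw [map_smul, ha', eq_neg_of_add_eq_zero_left hb2]
      rw [show -((2:K) • b) - (m:K) • b = -((m + 2 : K) • b) by module, neg_smul, smul_neg, neg_neg,
        smul_smul, inv_mul_cancel₀ hm, one_smul]
  obtain ⟨a, ha⟩ := this N
  rw [← ha, hN]; rfl

/-- solve `(H+2) c = b` in ker E -/
lemma pl_solve [FiniteDimensional K M] (hHE : ∀ v, H (E v) = E (H v) + (2:K) • E v)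
    (hEG : ∀ v, E (G v) = G (E v) + H v) (b : M) (hb : E b = 0) :
    ∃ c, E c = 0 ∧ H c + (2:K) • c = b := by
  have hmap : ∀ v ∈ LinearMap.ker E, (H + (2:K) • (1 : Module.End K M)) v ∈ LinearMap.ker E := by
    intro v hv
    rw [LinearMap.mem_ker] at hv ⊢
    have := hHE v
    simp only [hv, map_zero, smul_zero, add_zero] at this
    simp [hv, ← this]
  let T := (H + (2:K) • (1 : Module.End K M)).restrict hmap
  have hT : Function.Injective T := by
    rw [← LinearMap.ker_eq_bot, LinearMap.ker_eq_bot']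
    rintro ⟨v, hv⟩ h
    have := congrArg Subtype.val h
    have h2 : v = 0 := pl_inj hHE hEG (pl_nilp hHE) v hv (by simpa [T, LinearMap.restrict_apply] using this)
    exact Subtype.ext h2
  obtain ⟨⟨c, hc⟩, h⟩ := (LinearMap.injective_iff_surjective.mp hT) ⟨b, hb⟩
  exact ⟨c, hc, by simpa [T, LinearMap.restrict_apply] using congrArg Subtype.val h⟩

/-- span of highest weight vectors of weight at least m -/
def hwSpan (E H : Module.End K M) (m : ℕ) : Submodule K M :=
  Submodule.span K {u | E u = 0 ∧ ∃ l : ℕ, m ≤ l ∧ H u = (l:K) • u}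

def strSpan (E G H : Module.End K M) : Submodule K M :=
  Submodule.span K {v | ∃ u, E u = 0 ∧ ∃ l i : ℕ, i ≤ l ∧ H u = (l:K) • u ∧ v = (G^i) u}

lemma hwSpan_solve (m : ℕ) (w : M) (hw : w ∈ hwSpan E H (m+1)) :
    ∃ w' ∈ hwSpan E H (m+1), H w' - (m:K) • w' = w := by
  induction hw using Submodule.span_induction with
  | mem u hu =>
    obtain ⟨hu1, l, hl, hu2⟩ := hu
    have : (l - m : K) ≠ 0 := by
      rw [sub_ne_zero]; exact_mod_cast (by omega : l ≠ m)
    refine ⟨(l - m : K)⁻¹ • u, Submodule.smul_mem _ _ (Submodule.subset_span ⟨hu1, l, hl, hu2⟩), ?_⟩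
    rw [map_smul, hu2, smul_comm (m:K), ← smul_sub, ← sub_smul, smul_smul, inv_mul_cancel₀ this,
      one_smul]
  | zero => exact ⟨0, Submodule.zero_mem _, by simp⟩
  | add x y _ _ hx hy =>
    obtain ⟨x', hx', rfl⟩ := hx
    obtain ⟨y', hy', rfl⟩ := hy
    exact ⟨x' + y', Submodule.add_mem _ hx' hy', by rw [map_add]; module⟩
  | smul c x _ hx =>
    obtain ⟨x', hx', rfl⟩ := hx
    exact ⟨c • x', Submodule.smul_mem _ _ hx', by rw [map_smul]; module⟩

lemma hwSpan_le (m : ℕ) : hwSpan E H (m+1) ≤ hwSpan E H m :=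
  Submodule.span_mono fun _ ⟨h1, l, hl, h2⟩ => ⟨h1, l, by omega, h2⟩

lemma hwSpan_ker (m : ℕ) (w : M) (hw : w ∈ hwSpan E H m) : E w = 0 := by
  have : hwSpan E H m ≤ LinearMap.ker E := Submodule.span_le.mpr fun u hu => hu.1
  exact this hw

lemma mem_hwSpan (hHE : ∀ v, H (E v) = E (H v) + (2:K) • E v)
    (hEG : ∀ v, E (G v) = G (E v) + H v) (hE : IsNilpotent E) (m : ℕ) (a : M)
    (hb : E ((E^m) a) = 0) : (E^m) a ∈ hwSpan E H m := by
  obtain ⟨N, hN⟩ := hE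
  suffices ∀ k m : ℕ, N ≤ m + k → ∀ a, E ((E^m) a) = 0 → (E^m) a ∈ hwSpan E H m from
    this N m (by omega) a hb
  intro k
  induction k with
  | zero =>
    intro m hm a _
    have : E ^ m = 0 := by
      obtain ⟨j, rfl⟩ := Nat.exists_eq_add_of_le (by omega : N ≤ m)
      rw [pow_add, hN, zero_mul]
    simp [this]
  | succ k ih =>
    intro m hm a hb
    set b := (E^m) a with hbdef
    obtain ⟨a', ha'⟩ := pl_step hHE hEG m a b hb rfl
    have hk : E ((E^(m+1)) a') = 0 := by
      rw [ha', map_sub, map_smul, hb]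
      have := hHE b
      simp only [hb, map_zero, smul_zero, add_zero] at this
      simp [← this]
    have h1 := ih (m+1) (by omega) a' hk
    obtain ⟨w, hw, hw2⟩ := hwSpan_solve m _ h1
    rw [ha'] at hw2
    have h3 : b - w ∈ hwSpan E H m := by
      refine Submodule.subset_span ⟨by rw [map_sub, hb, hwSpan_ker _ w hw, sub_zero], m, le_rfl, ?_⟩
      rw [map_sub, smul_sub]
      rw [sub_eq_sub_iff_add_eq_add] at hw2 ⊢
      rw [add_comm, add_comm ((m:K) • b), hw2, add_comm]
    have := Submodule.add_mem _ h3 (hwSpan_le m hw)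
    simpa using this

lemma str_H (hHG : ∀ v, H (G v) = G (H v) - (2:K) • G v) (u : M) (l : K) (hu : H u = l • u) (i : ℕ) :
    H ((G^i) u) = (l - 2 * i : K) • (G^i) u := by
  induction i with
  | zero => simpa using hu
  | succ i ih =>
    rw [pow_succ', Module.End.mul_apply, hHG, ih, map_smul]; push_cast; module

lemma str_E (hEG : ∀ v, E (G v) = G (E v) + H v)
    (hHG : ∀ v, H (G v) = G (H v) - (2:K) • G v) (u : M) (l : K) (hu : H u = l • u) (hu0 : E u = 0)
    (i : ℕ) : E ((G^(i+1)) u) = ((i+1) * (l - i) : K) • (G^i) u := by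
  induction i with
  | zero => simp [hEG, hu0, hu]
  | succ i ih =>
    rw [pow_succ', Module.End.mul_apply, hEG, ih, str_H hHG u l hu, map_smul]
    rw [show G ((G^i) u) = (G^(i+1)) u by rw [pow_succ', Module.End.mul_apply]]
    push_cast; module

lemma str_Epow (hEG : ∀ v, E (G v) = G (E v) + H v)
    (hHG : ∀ v, H (G v) = G (H v) - (2:K) • G v) (u : M) (l : ℕ) (hu : H u = (l:K) • u) (hu0 : E u = 0)
    (j i : ℕ) (hi : i + j ≤ l) : ∃ c : K, c ≠ 0 ∧ (E^j) ((G^(i+j)) u) = c • (G^i) u := by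
  induction j with
  | zero => exact ⟨1, one_ne_zero, by simp⟩
  | succ j ih =>
    obtain ⟨c, hc, h⟩ := ih (by omega)
    refine ⟨((i+j:ℕ)+1) * (l - (i+j:ℕ)) * c, ?_, ?_⟩
    · refine mul_ne_zero (mul_ne_zero (by exact_mod_cast Nat.succ_ne_zero (i+j)) ?_) hc
      rw [sub_ne_zero]; exact_mod_cast (by omega : l ≠ i + j)
    · rw [pow_succ, Module.End.mul_apply, ← add_assoc, str_E hEG hHG u l hu hu0, map_smul, h, smul_smul]

theorem strSpan_top [FiniteDimensional K M] (hHE : ∀ v, H (E v) = E (H v) + (2:K) • E v)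
    (hEG : ∀ v, E (G v) = G (E v) + H v)
    (hHG : ∀ v, H (G v) = G (H v) - (2:K) • G v) : strSpan E G H = ⊤ := by
  have hE := pl_nilp hHE
  have key : ∀ m, ∀ v, (E^m) v = 0 → v ∈ strSpan E G H := by
    intro m
    induction m with
    | zero => intro v hv; simp at hv; simp [hv]
    | succ m ih =>
      intro v hv
      rw [pow_succ', Module.End.mul_apply] at hv
      have h1 := mem_hwSpan hHE hEG hE m v hv
      have h2 : ∀ w ∈ hwSpan E H m, ∃ w' ∈ strSpan E G H, (E^m) w' = w := by
        intro w hw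
        induction hw using Submodule.span_induction with
        | mem u hu =>
          obtain ⟨hu1, l, hl, hu2⟩ := hu
          obtain ⟨c, hc, h⟩ := str_Epow hEG hHG u l hu2 hu1 m 0 (by omega)
          rw [zero_add] at h
          refine ⟨c⁻¹ • (G^m) u, Submodule.smul_mem _ _ (Submodule.subset_span
            ⟨u, hu1, l, m, hl, hu2, rfl⟩), ?_⟩
          rw [map_smul, h, smul_smul, inv_mul_cancel₀ hc]; simp
        | zero => exact ⟨0, Submodule.zero_mem _, by simp⟩
        | add x y _ _ hx hy =>
          obtain ⟨x', hx', rfl⟩ := hx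
          obtain ⟨y', hy', rfl⟩ := hy
          exact ⟨x' + y', Submodule.add_mem _ hx' hy', by rw [map_add]⟩
        | smul c x _ hx =>
          obtain ⟨x', hx', rfl⟩ := hx
          exact ⟨c • x', Submodule.smul_mem _ _ hx', by rw [map_smul]⟩
      obtain ⟨w', hw', h⟩ := h2 _ h1
      have := ih (v - w') (by rw [map_sub, h, sub_self])
      simpa using Submodule.add_mem _ this hw'
  obtain ⟨N, hN⟩ := hE
  exact eq_top_iff.mpr fun v _ => key N v (by rw [hN]; rfl)

/-- induction principle: M is spanned by eigenvectors with integer eigenvalue -/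
lemma eig_span [FiniteDimensional K M] (hHE : ∀ v, H (E v) = E (H v) + (2:K) • E v)
    (hEG : ∀ v, E (G v) = G (E v) + H v)
    (hHG : ∀ v, H (G v) = G (H v) - (2:K) • G v) :
    Submodule.span K {v | ∃ k : K, H v = k • v} = ⊤ := by
  rw [eq_top_iff, ← strSpan_top hHE hEG hHG]
  refine Submodule.span_mono ?_
  rintro v ⟨u, hu, l, i, _, h, rfl⟩
  exact ⟨_, str_H hHG u l h i⟩

lemma eig_norm (hs : Submodule.span K {v | ∃ k : K, H v = k • v} = ⊤) (μ : K) (v : M) :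
    ∃ a, H (v + (H a - μ • a)) = μ • (v + (H a - μ • a)) := by
  have hv : v ∈ Submodule.span K {v | ∃ k : K, H v = k • v} := hs ▸ Submodule.mem_top
  induction hv using Submodule.span_induction with
  | mem u hu =>
    obtain ⟨k, hk⟩ := hu
    by_cases hkm : k = μ
    · exact ⟨0, by simp [hk, hkm]⟩
    · refine ⟨-(k - μ)⁻¹ • u, ?_⟩
      have : u + (H (-(k - μ)⁻¹ • u) - μ • (-(k - μ)⁻¹ • u)) = 0 := by
        rw [map_smul, hk, smul_comm μ, ← smul_sub, ← sub_smul, smul_smul, neg_mul,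
          inv_mul_cancel₀ (sub_ne_zero.mpr hkm)]
        simp
      rw [this]; simp
  | zero => exact ⟨0, by simp⟩
  | add x y _ _ hx hy =>
    obtain ⟨a, ha⟩ := hx
    obtain ⟨b, hb⟩ := hy
    refine ⟨a + b, ?_⟩
    rw [show x + y + (H (a+b) - μ • (a+b)) = (x + (H a - μ • a)) + (y + (H b - μ • b)) by
      rw [map_add]; module, map_add H (x + _), ha, hb, ← smul_add]
  | smul c x _ hx =>
    obtain ⟨a, ha⟩ := hx
    refine ⟨c • a, ?_⟩
    rw [show c • x + (H (c • a) - μ • (c • a)) = c • (x + (H a - μ • a)) by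
      rw [map_smul]; module, map_smul, ha, smul_comm]

lemma eig_ker [FiniteDimensional K M] (hs : Submodule.span K {v | ∃ k : K, H v = k • v} = ⊤)
    (μ : K) (v : M) (hv : H (H v - μ • v) = μ • (H v - μ • v)) : H v = μ • v := by
  let T : Module.End K M := H - μ • 1
  have hT : ∀ x, T x = H x - μ • x := fun x => by simp [T]
  have hr : ∀ x, ∃ y, T x = T (T y) := by
    intro x
    obtain ⟨a, ha⟩ := eig_norm hs μ x
    refine ⟨-a, ?_⟩
    have : T (x + T a) = 0 := by rw [hT a, hT, ha, sub_self]
    rw [map_add] at this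
    rw [map_neg, map_neg, ← add_eq_zero_iff_eq_neg]; exact this
  -- T restricted to range T is surjective so injective
  have hmap : ∀ x ∈ LinearMap.range T, T x ∈ LinearMap.range T := fun x _ => ⟨x, rfl⟩
  have hsurj : Function.Surjective (T.restrict hmap) := by
    rintro ⟨_, x, rfl⟩
    obtain ⟨y, hy⟩ := hr x
    exact ⟨⟨T y, y, rfl⟩, Subtype.ext hy.symm⟩
  have hinj := LinearMap.injective_iff_surjective.mpr hsurj
  have h0 : T.restrict hmap ⟨T v, v, rfl⟩ = 0 := by
    apply Subtype.ext
    change T (T v) = 0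
    rw [hT v, hT, hv, sub_self]
  have := (LinearMap.map_eq_zero_iff _ hinj).mp h0
  have h2 : T v = 0 := congrArg Subtype.val this
  rw [hT] at h2
  exact sub_eq_zero.mp h2

lemma eig_two [FiniteDimensional K M] (hHE : ∀ v, H (E v) = E (H v) + (2:K) • E v)
    (hEG : ∀ v, E (G v) = G (E v) + H v)
    (hHG : ∀ v, H (G v) = G (H v) - (2:K) • G v) (w : M) (hw : H w = (2:K) • w) :
    ∃ d, E (E d) = w := by
  have hs := eig_span hHE hEG hHG
  have key : ∀ v, ∃ d a, H (E (E d)) = (2:K) • E (E d) ∧ v = E (E d) + (H a - (2:K) • a) := by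
    intro v
    have hv : v ∈ strSpan E G H := strSpan_top hHE hEG hHG ▸ Submodule.mem_top
    induction hv using Submodule.span_induction with
    | mem v hv =>
      obtain ⟨u, hu, l, i, hi, h, rfl⟩ := hv
      have hH := str_H hHG u l h i
      by_cases hl : l = 2 * i + 2
      · obtain ⟨c, hc, hE⟩ := str_Epow hEG hHG u l h hu 2 i (by omega)
        have h2 : E (E (c⁻¹ • (G^(i+2)) u)) = (G^i) u := by
          have : E (E ((G^(i+2)) u)) = c • (G^i) u := by simpa [pow_two] using hE
          rw [map_smul, map_smul, this, smul_smul, inv_mul_cancel₀ hc, one_smul]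
        refine ⟨c⁻¹ • (G^(i+2)) u, 0, ?_, ?_⟩
        · rw [h2, hH, hl]; push_cast; congr 1; ring
        · rw [h2]; simp
      · have hne : (l - 2 * i - 2 : K) ≠ 0 := by
          rw [sub_sub, sub_ne_zero]; exact_mod_cast hl
        refine ⟨0, (l - 2 * i - 2 : K)⁻¹ • (G^i) u, by simp, ?_⟩
        rw [map_smul, hH, smul_comm (2:K), ← smul_sub, ← sub_smul, smul_smul, inv_mul_cancel₀ hne]
        simp
    | zero => exact ⟨0, 0, by simp, by simp⟩
    | add x y _ _ hx hy =>
      obtain ⟨d, a, h1, rfl⟩ := hx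
      obtain ⟨d', a', h1', rfl⟩ := hy
      exact ⟨d + d', a + a', by simp only [map_add, h1, h1', smul_add],
        by simp only [map_add]; module⟩
    | smul c x _ hx =>
      obtain ⟨d, a, h1, rfl⟩ := hx
      exact ⟨c • d, c • a, by simp only [map_smul, h1]; rw [smul_comm],
        by simp only [map_smul]; module⟩
  obtain ⟨d, a, h1, h2⟩ := key w
  refine ⟨d, ?_⟩
  have h3 : H (H a - (2:K) • a) = (2:K) • (H a - (2:K) • a) := by
    have : H a - (2:K) • a = w - E (E d) := by rw [h2]; abel
    rw [this, map_sub, hw, h1, smul_sub]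
  have := eig_ker hs 2 a h3
  rw [h2, this, sub_self, add_zero]

end LinAlg
section LieA
variable {K L : Type*} [Field K] [CharZero K] [LieRing L] [LieAlgebra K L] [FiniteDimensional K L]

def qmk (I : LieIdeal K L) : L →ₗ⁅K⁆ L ⧸ I :=
  { (LieSubmodule.Quotient.mk' I : L →ₗ[K] L ⧸ I) with
    map_lie' := fun {x y} => rfl }

lemma qmk_surj (I : LieIdeal K L) : Function.Surjective (qmk I) :=
  LieSubmodule.Quotient.surjective_mk' I

lemma qmk_zero (I : LieIdeal K L) (x : L) : qmk I x = 0 ↔ x ∈ I :=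
  LieSubmodule.Quotient.mk_eq_zero'

lemma triple_of_pre (e f0 : L) (he : ⁅⁅e, f0⁆, e⁆ = (2:K) • e) :
    ∃ f, ⁅e, f⁆ = ⁅e, f0⁆ ∧ ⁅⁅e, f⁆, f⁆ = -((2:K) • f) := by
  set h := ⁅e, f0⁆ with hh
  have hHE : ∀ v, (LieAlgebra.ad K L h) (LieAlgebra.ad K L e v) =
      (LieAlgebra.ad K L e) (LieAlgebra.ad K L h v) + (2:K) • LieAlgebra.ad K L e v := by
    intro v
    simp only [LieAlgebra.ad_apply]
    rw [leibniz_lie h e v, he, smul_lie, add_comm]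
  have hEG : ∀ v, (LieAlgebra.ad K L e) (LieAlgebra.ad K L f0 v) =
      (LieAlgebra.ad K L f0) (LieAlgebra.ad K L e v) + LieAlgebra.ad K L h v := by
    intro v
    simp only [LieAlgebra.ad_apply]
    rw [leibniz_lie e f0 v, add_comm]
  have hb : LieAlgebra.ad K L e (⁅h, f0⁆ + (2:K) • f0) = 0 := by
    simp only [LieAlgebra.ad_apply]
    rw [lie_add, leibniz_lie e h f0, lie_smul, ← hh, lie_self, ← lie_skew e h, he, neg_lie, smul_lie,
      ← hh]
    abel
  obtain ⟨c, hc, hc2⟩ := pl_solve hHE hEG _ hb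
  simp only [LieAlgebra.ad_apply] at hc hc2
  refine ⟨f0 - c, by rw [lie_sub, hc, sub_zero], ?_⟩
  rw [lie_sub e, hc, sub_zero, ← hh, lie_sub, eq_sub_of_add_eq hc2]
  module

lemma lift_abelian (A : LieIdeal K L) (hA : ∀ a ∈ A, ∀ b ∈ A, ⁅a, b⁆ = 0) (e0 f1 : L)
    (h1 : ⁅⁅e0, f1⁆, e0⁆ - (2:K) • e0 ∈ A) (h2 : ⁅⁅e0, f1⁆, f1⁆ + (2:K) • f1 ∈ A) :
    ∃ e f : L, e - e0 ∈ A ∧ ⁅⁅e, f⁆, e⁆ = (2:K) • e := by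
  set h0 := ⁅e0, f1⁆ with hh0
  have hmem : ∀ x : L, ∀ a ∈ A, ⁅x, a⁆ ∈ A := fun x a ha => lie_mem_right K L A x a ha
  have hmem' : ∀ x : L, ∀ a ∈ A, ⁅a, x⁆ ∈ A := fun x a ha => lie_mem_left K L A a x ha
  let H := LieModule.toEnd K L A h0
  let E := LieModule.toEnd K L A e0
  let G := LieModule.toEnd K L A f1
  have cH : ∀ v : A, ((H v : A) : L) = ⁅h0, (v : L)⁆ := fun v => rfl
  have cE : ∀ v : A, ((E v : A) : L) = ⁅e0, (v : L)⁆ := fun v => rfl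
  have cG : ∀ v : A, ((G v : A) : L) = ⁅f1, (v : L)⁆ := fun v => rfl
  have hHE : ∀ v, H (E v) = E (H v) + (2:K) • E v := by
    rintro ⟨v, hv⟩
    apply Subtype.ext
    simp only [LieSubmodule.coe_add, LieSubmodule.coe_smul, cH, cE]
    have := hA _ h1 v hv
    rw [sub_lie, smul_lie, sub_eq_zero] at this
    rw [leibniz_lie h0 e0, this, add_comm]
  have hHG : ∀ v, H (G v) = G (H v) - (2:K) • G v := by
    rintro ⟨v, hv⟩
    apply Subtype.ext
    simp only [LieSubmodule.coe_sub, LieSubmodule.coe_smul, cH, cG]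
    have := hA _ h2 v hv
    rw [add_lie, smul_lie] at this
    rw [leibniz_lie h0 f1, eq_neg_of_add_eq_zero_left this, add_comm, sub_eq_add_neg]
  have hEG : ∀ v, E (G v) = G (E v) + H v := by
    rintro ⟨v, hv⟩
    apply Subtype.ext
    simp only [LieSubmodule.coe_add, cH, cG, cE]
    rw [leibniz_lie e0 f1, add_comm]
  have hs := eig_span hHE hEG hHG
  obtain ⟨⟨a, ha⟩, haa⟩ := eig_norm hs 2 ⟨_, h1⟩
  obtain ⟨⟨a', ha'⟩, haa'⟩ := eig_norm hs (-2) ⟨_, h2⟩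
  replace haa := congrArg Subtype.val haa
  replace haa' := congrArg Subtype.val haa'
  simp only [LieSubmodule.coe_add, LieSubmodule.coe_smul, LieSubmodule.coe_sub, cH] at haa haa'
  set g := ⁅h0, e0⁆ - (2:K) • e0 + (⁅h0, a⁆ - (2:K) • a) with hg
  set g' := ⁅h0, f1⁆ + (2:K) • f1 + (⁅h0, a'⁆ - (-2:K) • a') with hg'
  have hgA : g ∈ A := add_mem h1 (sub_mem (hmem _ _ ha) (A.smul_mem _ ha))
  have hgA' : g' ∈ A := add_mem h2 (sub_mem (hmem _ _ ha') (A.smul_mem _ ha'))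
  obtain ⟨e, he⟩ : ∃ e, e = e0 + a := ⟨_, rfl⟩
  obtain ⟨f, hf⟩ : ∃ f, f = f1 + a' := ⟨_, rfl⟩
  have h0e : ⁅h0, e⁆ = (2:K) • e + g := by rw [he, hg, lie_add]; module
  have h0f : ⁅h0, f⁆ = -((2:K) • f) + g' := by rw [hf, hg', lie_add]; module
  clear_value g g'
  obtain ⟨b, hb⟩ : ∃ b, b = ⁅e, f⁆ - h0 := ⟨_, rfl⟩
  have hbA : b ∈ A := by
    have : b = ⁅e0, a'⁆ + ⁅a, f1 + a'⁆ := by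
      rw [hb, he, hf, hh0, add_lie, lie_add e0]; abel
    rw [this]
    exact add_mem (hmem _ _ ha') (hmem' _ _ ha)
  have hef : ⁅e, f⁆ = h0 + b := by rw [hb]; abel
  have h0b : ⁅h0, b⁆ = ⁅g, f⁆ + ⁅e, g'⁆ := by
    have : ⁅h0, ⁅e, f⁆⁆ = ⁅g, f⁆ + ⁅e, g'⁆ := by
      rw [leibniz_lie h0 e f, h0e, h0f, add_lie, lie_add, smul_lie, lie_neg, lie_smul]; abel
    rw [← this, hef, lie_add, lie_self, zero_add]
  have h00b : ⁅h0, ⁅h0, b⁆⁆ = 0 := by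
    rw [h0b, lie_add, leibniz_lie h0 g f, leibniz_lie h0 e g', haa, haa', h0e, h0f, add_lie, lie_add,
      hA g hgA g' hgA', smul_lie, smul_lie, lie_neg, lie_smul, lie_smul]
    module
  have h0b0 : ⁅h0, b⁆ = 0 := by
    have := eig_ker hs 0 ⟨b, hbA⟩ (by
      apply Subtype.ext
      simp only [zero_smul, sub_zero, cH, h00b]
      rfl)
    simpa [cH] using congrArg Subtype.val this
  have hwA : g + ⁅b, e⁆ ∈ A := add_mem hgA (hmem' _ _ hbA)
  obtain ⟨⟨d, hd⟩, hdd⟩ := eig_two hHE hEG hHG ⟨g + ⁅b, e⁆, hwA⟩ (by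
    apply Subtype.ext
    simp only [LieSubmodule.coe_smul, cH]
    rw [lie_add, haa, leibniz_lie h0 b e, h0b0, zero_lie, zero_add, h0e, lie_add, hA b hbA g hgA,
      add_zero, lie_smul, smul_add])
  replace hdd := congrArg Subtype.val hdd
  simp only [cE] at hdd
  have hed : ⁅e, d⁆ = ⁅e0, d⁆ := by rw [he, add_lie, hA a ha d hd, add_zero]
  have heed : ⁅e, ⁅e, d⁆⁆ = g + ⁅b, e⁆ := by
    rw [hed, he, add_lie, hA a ha _ (hmem _ _ hd), add_zero, hdd, he]
  refine ⟨e, f + d, by rw [he]; simpa using ha, ?_⟩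
  rw [lie_add, add_lie, ← lie_skew ⁅e, d⁆ e, heed, hef, add_lie, h0e]
  abel

lemma lift_step (R0 A : LieIdeal K L) (hAR : A ≤ R0) (y e0 f0 : L) (hy : e0 - y ∈ R0)
    (h1 : ⁅⁅e0, f0⁆, e0⁆ - (2:K) • e0 ∈ A) :
    ∃ e f : L, e - y ∈ R0 ∧ ⁅⁅e, f⁆, e⁆ - (2:K) • e ∈ (⁅A, A⁆ : LieIdeal K L) := by
  -- first correct modulo A
  obtain ⟨f1, hf1, hf2⟩ : ∃ f1 : L, ⁅⁅e0, f1⁆, e0⁆ - (2:K) • e0 ∈ A ∧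
      ⁅⁅e0, f1⁆, f1⁆ + (2:K) • f1 ∈ A := by
    let π : L →ₗ⁅K⁆ L ⧸ A := qmk A
    have hπ : ∀ x, π x = 0 ↔ x ∈ A := qmk_zero A
    have hp : ⁅⁅π e0, π f0⁆, π e0⁆ = (2:K) • π e0 := by
      rw [← sub_eq_zero, ← LieHom.map_lie, ← LieHom.map_lie, ← map_smul, ← map_sub, hπ]
      exact h1
    obtain ⟨f, hf, hf'⟩ := triple_of_pre (π e0) (π f0) hp
    obtain ⟨f1, rfl⟩ : ∃ f1, π f1 = f := qmk_surj A f
    refine ⟨f1, ?_, ?_⟩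
    · rw [← hπ, map_sub, map_smul, LieHom.map_lie, LieHom.map_lie, hf, hp, sub_self]
    · rw [← hπ, map_add, map_smul, LieHom.map_lie, LieHom.map_lie, hf']; abel
  let B : LieIdeal K L := ⁅A, A⁆
  have hBA : B ≤ A := LieSubmodule.lie_le_left A A
  let π : L →ₗ⁅K⁆ L ⧸ B := qmk B
  have hsurj : Function.Surjective π := qmk_surj B
  have hπ : ∀ x, π x = 0 ↔ x ∈ B := qmk_zero B
  let A' : LieIdeal K (L ⧸ B) := LieIdeal.map π A
  have hA' : ∀ x, x ∈ A' ↔ ∃ a ∈ A, π a = x := by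
    intro x
    constructor
    · intro hx
      obtain ⟨⟨a, ha⟩, h⟩ := LieIdeal.mem_map_of_surjective hsurj hx
      exact ⟨a, ha, h⟩
    · rintro ⟨a, ha, rfl⟩
      exact LieIdeal.mem_map ha
  have hab : ∀ a ∈ A', ∀ b ∈ A', ⁅a, b⁆ = 0 := by
    intro a ha b hb
    obtain ⟨a, ha2, rfl⟩ := (hA' a).mp ha
    obtain ⟨b, hb2, rfl⟩ := (hA' b).mp hb
    rw [← LieHom.map_lie, hπ]
    exact LieSubmodule.lie_mem_lie ha2 hb2
  obtain ⟨e, f, he, hf⟩ := lift_abelian A' hab (π e0) (π f1)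
    ((hA' _).mpr ⟨_, hf1, by simp only [map_sub, map_smul, LieHom.map_lie]⟩)
    ((hA' _).mpr ⟨_, hf2, by simp only [map_add, map_smul, LieHom.map_lie]⟩)
  obtain ⟨e, rfl⟩ := hsurj e
  obtain ⟨f, rfl⟩ := hsurj f
  refine ⟨e, f, ?_, ?_⟩
  · obtain ⟨a, ha, h⟩ := (hA' _).mp he
    rw [← sub_eq_zero, ← map_sub, ← map_sub, hπ] at h
    have h2 : a - (a - (e - e0)) ∈ A := sub_mem ha (hBA h)
    rw [sub_sub_cancel] at h2
    have := add_mem (hAR h2) hy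
    simpa using this
  · change _ ∈ B
    rw [← hπ, map_sub, map_smul, LieHom.map_lie, LieHom.map_lie, hf, sub_self]

lemma lift_solvable (R0 : LieIdeal K L) [LieAlgebra.IsSolvable R0] (y f0 : L)
    (h1 : ⁅⁅y, f0⁆, y⁆ - (2:K) • y ∈ R0) :
    ∃ e f : L, e - y ∈ R0 ∧ ⁅⁅e, f⁆, e⁆ = (2:K) • e ∧ ⁅⁅e, f⁆, f⁆ = -((2:K) • f) := by
  have key : ∀ k, ∃ e f : L, e - y ∈ R0 ∧
      ⁅⁅e, f⁆, e⁆ - (2:K) • e ∈ LieAlgebra.derivedSeriesOfIdeal K L k R0 := by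
    intro k
    induction k with
    | zero => exact ⟨y, f0, by simp, h1⟩
    | succ k ih =>
      obtain ⟨e, f, he, hf⟩ := ih
      rw [LieAlgebra.derivedSeriesOfIdeal_succ]
      exact lift_step R0 _ (LieAlgebra.derivedSeriesOfIdeal_le_self R0 k) y e f he hf
  obtain ⟨k, hk⟩ := (LieAlgebra.isSolvable_iff K (L := R0)).mp inferInstance
  rw [LieIdeal.derivedSeries_eq_bot_iff] at hk
  obtain ⟨e, f, he, hf⟩ := key k
  rw [hk, LieSubmodule.mem_bot, sub_eq_zero] at hf
  obtain ⟨f', h1, h2⟩ := triple_of_pre e f hf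
  exact ⟨e, f', he, by rw [h1, hf], h2⟩

end LieA
section JM
variable {K M : Type*} [Field K] [CharZero K] [AddCommGroup M] [Module K M]

lemma jm_pow_comm (a b c : Module.End K M) (hc : a * b = b * a + c) (hac : a * c = c * a) (j : ℕ) :
    a ^ (j+1) * b = b * a ^ (j+1) + ((j+1 : ℕ) : K) • (a ^ j * c) := by
  induction j with
  | zero => simp [hc]
  | succ j ih =>
    rw [pow_succ' a (j+1), mul_assoc, ih, mul_add, ← mul_assoc, hc, mul_smul_comm, ← mul_assoc,
      ← pow_succ', add_mul, mul_assoc b]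
    have h : c * a ^ (j+1) = a ^ (j+1) * c := (Commute.pow_left (show Commute a c from hac) (j+1)).eq.symm
    rw [h]
    push_cast
    module

lemma jm_c_nilp (a b c : Module.End K M) (hc : a * b = b * a + c) (hac : a * c = c * a)
    (ha : IsNilpotent a) : IsNilpotent c := by
  have key : ∀ (n m : ℕ), a ^ n * c ^ m = 0 → IsNilpotent c := by
    intro n
    induction n with
    | zero => intro m h; exact ⟨m, by simpa using h⟩
    | succ n ih =>
      intro m h
      apply ih (m + 1 + m)
      have h' : c ^ m * a ^ (n+1) = 0 := by
        rw [← h]; exact ((Commute.pow_pow (show Commute a c from hac) _ _).eq).symm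
      have h1 := congrArg (fun t => c ^ m * t * c ^ m) (jm_pow_comm a b c hc hac n)
      simp only [mul_add, add_mul] at h1
      rw [← mul_assoc, h', mul_assoc (c^m), mul_assoc b, h, mul_smul_comm, smul_mul_assoc] at h1
      simp only [zero_mul, mul_zero, zero_add] at h1
      have h2 := (smul_eq_zero.mp h1.symm).resolve_left (by exact_mod_cast Nat.succ_ne_zero n)
      rw [← h2, pow_add, pow_succ', ← mul_assoc, ← mul_assoc, ← mul_assoc,
        ← (Commute.pow_pow (show Commute a c from hac) n m).eq, mul_assoc _ (c^m) c, mul_assoc _ c (c^m), ← pow_succ, ← pow_succ']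
  obtain ⟨n, hn⟩ := ha
  exact key n 0 (by simp [hn])

lemma jm_ab_nilp (a b c : Module.End K M) (hc : a * b = b * a + c) (hac : a * c = c * a)
    (ha : IsNilpotent a) : IsNilpotent (a * b) := by
  obtain ⟨r, hr⟩ := jm_c_nilp a b c hc hac ha
  obtain ⟨n, hn⟩ := ha
  have key : ∀ j : ℕ, ∃ N : ℕ, ∀ v, (a ^ j) v = 0 → ((a * b) ^ N) v = 0 := by
    intro j
    induction j with
    | zero => exact ⟨0, fun v h => by simpa using h⟩
    | succ j ih =>
      obtain ⟨N, hN⟩ := ih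
      have e1 : ∀ v, (a ^ (j+1)) v = 0 →
          (a ^ j) ((a*b) v) = ((j+1 : ℕ) : K) • c ((a^j) v) := by
        intro v hv
        have h := LinearMap.congr_fun (jm_pow_comm a b c hc hac j) v
        simp only [LinearMap.add_apply, Module.End.mul_apply, LinearMap.smul_apply, hv, map_zero,
          zero_add] at h
        have h3 : (a ^ j) (c v) = c ((a ^ j) v) :=
          LinearMap.congr_fun (Commute.pow_left (show Commute a c from hac) j).eq v
        rw [← h3, ← h, pow_succ]; rfl
      have e2 : ∀ v, (a ^ (j+1)) v = 0 → (a ^ (j+1)) ((a*b) v) = 0 := by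
        intro v hv
        have h3 : a (c ((a ^ j) v)) = c (a ((a ^ j) v)) := LinearMap.congr_fun hac _
        have h4 : a ((a ^ j) v) = 0 := by rw [← hv, pow_succ']; rfl
        rw [pow_succ', Module.End.mul_apply, e1 v hv, map_smul, h3, h4, map_zero, smul_zero]
      have e3 : ∀ (i : ℕ) v, (a ^ (j+1)) v = 0 → (a ^ (j+1)) (((a*b)^i) v) = 0 ∧
          ∃ k : K, (a ^ j) (((a*b)^i) v) = k • (c ^ i) ((a^j) v) := by
        intro i v hv
        induction i with
        | zero => exact ⟨by simpa using hv, 1, by simp⟩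
        | succ i ih =>
          obtain ⟨i1, k, i2⟩ := ih
          rw [pow_succ' (a*b), Module.End.mul_apply]
          refine ⟨e2 _ i1, ((j+1 : ℕ) : K) * k, ?_⟩
          rw [e1 _ i1, i2, map_smul, smul_smul, pow_succ', Module.End.mul_apply]
      refine ⟨N + r, fun v hv => ?_⟩
      rw [pow_add, Module.End.mul_apply]
      apply hN
      obtain ⟨_, k, hk⟩ := e3 r v hv
      rw [hk, hr]; simp
  obtain ⟨N, hN⟩ := key n
  exact ⟨N, LinearMap.ext fun v => hN v (by rw [hn]; rfl)⟩

lemma jm {S : Type*} [LieRing S] [LieAlgebra K S] [FiniteDimensional K S]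
    [LieAlgebra.IsKilling K S] (y : S) (hy : IsNilpotent (LieAlgebra.ad K S y)) :
    ∃ f : S, ⁅⁅y, f⁆, y⁆ = (2:K) • y := by
  have hnd : (killingForm K S).Nondegenerate := LieAlgebra.IsKilling.killingForm_nondegenerate K S
  have hrefl : (killingForm K S).IsRefl := (LieModule.traceForm_isSymm K S S).isRefl
  set W := LinearMap.range (LieAlgebra.ad K S y * LieAlgebra.ad K S y) with hW
  have hyW : y ∈ W := by
    rw [← LinearMap.BilinForm.orthogonal_orthogonal hnd hrefl W]
    rw [LinearMap.BilinForm.mem_orthogonal_iff]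
    intro z hz
    rw [LinearMap.BilinForm.mem_orthogonal_iff] at hz
    have h0 : ⁅y, ⁅y, z⁆⁆ = 0 := by
      apply hnd.2
      intro u
      have := hz (⁅y, ⁅y, u⁆⁆) ⟨u, rfl⟩
      have h1 := LieModule.traceForm_apply_lie_apply' K S S y ⁅y, u⁆ z
      have h2 := LieModule.traceForm_apply_lie_apply' K S S y u ⁅y, z⁆
      have : LieModule.traceForm K S S ⁅y, ⁅y, u⁆⁆ z = 0 := this
      change LieModule.traceForm K S S u ⁅y, ⁅y, z⁆⁆ = 0
      rw [h1, h2] at this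
      simpa using this
    have hk : killingForm K S z y = killingForm K S y z := (LieModule.traceForm_isSymm K S S).eq y z |>.symm ▸ rfl
    rw [hk, killingForm_apply_apply]
    have := jm_ab_nilp (LieAlgebra.ad K S y) (LieAlgebra.ad K S z) (LieAlgebra.ad K S ⁅y, z⁆)
      (by ext v; simp [add_comm]) (by
        ext v
        have := leibniz_lie y ⁅y, z⁆ v
        simp only [Module.End.mul_apply, LieAlgebra.ad_apply]
        rw [this, h0, zero_lie, zero_add]) hy
    exact (LinearMap.isNilpotent_trace_of_isNilpotent this).eq_zero
  obtain ⟨f0, hf0⟩ := hyW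
  have hf0 : ⁅y, ⁅y, f0⁆⁆ = y := hf0
  refine ⟨-((2:K) • f0), ?_⟩
  rw [lie_neg, lie_smul, neg_lie, smul_lie, ← lie_skew, hf0]
  module
end JM
section Jordan
variable {K : Type*} [Field K] [CharZero K]

lemma intertw {M N : Type*} [AddCommGroup M] [Module K M] [AddCommGroup N] [Module K N]
    (φ : M →ₗ[K] N) (A : Module.End K M) (B : Module.End K N) (h : ∀ v, φ (A v) = B (φ v))
    (p : Polynomial K) (v : M) :
    φ (Polynomial.aeval A p v) = Polynomial.aeval B p (φ v) := by
  induction p using Polynomial.induction_on' with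
  | add p q hp hq => simp [hp, hq]
  | monomial n a =>
    have : ∀ n : ℕ, φ ((A ^ n) v) = (B ^ n) (φ v) := by
      intro n
      induction n with
      | zero => simp
      | succ n ih => rw [pow_succ', pow_succ', Module.End.mul_apply, Module.End.mul_apply, h, ih]
    simp [Polynomial.aeval_monomial, this]

lemma ss_of_inj {M N : Type*} [AddCommGroup M] [Module K M] [AddCommGroup N] [Module K N]
    [FiniteDimensional K N]
    (φ : M →ₗ[K] N) (hφ : Function.Injective φ) (A : Module.End K M) (B : Module.End K N)
    (h : ∀ v, φ (A v) = B (φ v)) (hB : B.IsSemisimple) : A.IsSemisimple := by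
  apply Module.End.isSemisimple_of_squarefree_aeval_eq_zero hB.minpoly_squarefree
  ext v
  apply hφ
  rw [intertw φ A B h, minpoly.aeval]
  simp

lemma ss_of_surj {M N : Type*} [AddCommGroup M] [Module K M] [AddCommGroup N] [Module K N]
    [FiniteDimensional K M]
    (φ : M →ₗ[K] N) (hφ : Function.Surjective φ) (A : Module.End K M) (B : Module.End K N)
    (h : ∀ v, φ (A v) = B (φ v)) (hA : A.IsSemisimple) : B.IsSemisimple := by
  apply Module.End.isSemisimple_of_squarefree_aeval_eq_zero hA.minpoly_squarefree
  ext v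
  obtain ⟨v, rfl⟩ := hφ v
  rw [← intertw φ A B h, minpoly.aeval]
  simp

attribute [local instance 100] LieRing.ofAssociativeRing

lemma jordan {S : Type*} [LieRing S] [LieAlgebra K S] [FiniteDimensional K S]
    [LieAlgebra.IsKilling K S] (x : S) :
    ∃ y z : S, x = y + z ∧ IsNilpotent (LieAlgebra.ad K S y) ∧
      (LieAlgebra.ad K S z).IsSemisimple := by
  obtain ⟨n, hn, s, hs, hnn, hss, hD⟩ := (LieAlgebra.ad K S x).exists_isNilpotent_isSemisimple
  have hc : Commute n s := Algebra.commute_of_mem_adjoin_singleton_of_commute hs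
      (Algebra.commute_of_mem_adjoin_self hn).symm
  have hm := LieAlgebra.ad_mem_adjoin_of_isNilpotent hc hnn hss
  rw [Algebra.adjoin_singleton_eq_range_aeval] at hm
  obtain ⟨p, hp⟩ := hm
  have hp : Polynomial.aeval (LieAlgebra.ad K (Module.End K S) (n+s)) p =
    LieAlgebra.ad K (Module.End K S) n := hp
  rw [← hD] at hp
  set D := LieAlgebra.ad K S x with hDd
  let φ : S →ₗ[K] Module.End K S := (LieAlgebra.ad K S : S →ₗ[K] Module.End K S)
  have hφl : ∀ u v : S, φ ⁅u, v⁆ = ⁅φ u, φ v⁆ := fun u v => LieHom.map_lie (LieAlgebra.ad K S) u v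
  have hinj : Function.Injective φ := by
    intro u v huv
    have h1 : LieDerivation.ad K S (u - v) = 0 := by
      ext w
      have := LinearMap.congr_fun huv w
      have h2 : ⁅u, w⁆ = ⁅v, w⁆ := this
      simp [h2]
    exact sub_eq_zero.mp ((LieDerivation.IsKilling.ad_apply_eq_zero_iff (R := K) S _).mp h1)
  set δ : Module.End K S := Polynomial.aeval D p with hδ
  have hφD : ∀ v, φ (D v) = LieAlgebra.ad K (Module.End K S) D (φ v) := by
    intro v
    exact hφl x v
  have hφδ : ∀ v, φ (δ v) = ⁅n, φ v⁆ := by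
    intro v
    rw [hδ, intertw φ D _ hφD, hp]
    rfl
  let Δ : LieDerivation K S S :=
    { toLinearMap := δ
      leibniz' := by
        intro a b
        apply hinj
        rw [map_sub, hφδ, hφl, hφl, hφl, hφδ, hφδ, leibniz_lie, ← lie_skew (φ b)]
        abel }
  obtain ⟨y, hy⟩ := LieDerivation.IsKilling.exists_eq_ad (R := K) Δ
  have hy' : LieAlgebra.ad K S y = δ := by
    ext v
    have := DFunLike.congr_fun hy v
    rw [LieDerivation.ad_apply_apply] at this
    exact this
  have hφδ' : ∀ v, φ (δ v) = LieAlgebra.ad K (Module.End K S) n (φ v) := hφδ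
  refine ⟨y, x - y, by abel, ?_, ?_⟩
  · rw [hy']
    obtain ⟨k, hk⟩ := LieAlgebra.ad_nilpotent_of_nilpotent (R := K) hnn
    refine ⟨k, LinearMap.ext fun v => hinj ?_⟩
    have := intertw φ δ _ hφδ' (Polynomial.X ^ k) v
    simp only [map_pow, Polynomial.aeval_X] at this
    rw [this, hk]
    simp
  · rw [map_sub, hy']
    refine ss_of_inj φ hinj _ (LieAlgebra.ad K (Module.End K S) s) ?_
      (LieAlgebra.ad_isSemisimple_of_isSemisimple hss)
    intro v
    rw [LinearMap.sub_apply, map_sub, hφδ', ← hDd, hφD, hD, map_add]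
    simp
end Jordan
section Exist
variable {K L : Type*} [Field K] [CharZero K] [LieRing L] [LieAlgebra K L] [FiniteDimensional K L]

lemma quot_radical : LieAlgebra.HasTrivialRadical K (L ⧸ LieAlgebra.radical K L) := by
  rw [LieAlgebra.hasTrivialRadical_iff_no_abelian_ideals]
  set R := LieAlgebra.radical K L
  intro I hI
  have hab : ∀ a ∈ I, ∀ b ∈ I, ⁅a, b⁆ = 0 := by
    intro a ha b hb
    have := hI.trivial ⟨a, ha⟩ ⟨b, hb⟩
    exact congrArg Subtype.val this
  set J : LieIdeal K L := I.comap (qmk R)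
  have hJ : ∀ a, a ∈ J ↔ qmk R a ∈ I := fun a => LieIdeal.mem_comap
  have h1 : LieAlgebra.derivedSeriesOfIdeal K L 1 J ≤ R := by
    rw [LieAlgebra.derivedSeriesOfIdeal_succ, LieAlgebra.derivedSeriesOfIdeal_zero,
      LieSubmodule.lieIdeal_oper_eq_span, LieSubmodule.lieSpan_le]
    rintro _ ⟨⟨a, ha⟩, ⟨b, hb⟩, rfl⟩
    change ⁅a, b⁆ ∈ R
    rw [← qmk_zero, LieHom.map_lie]
    exact hab _ ((hJ a).mp ha) _ ((hJ b).mp hb)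
  have hsol : LieAlgebra.IsSolvable J := by
    obtain ⟨k, hk⟩ := (LieAlgebra.isSolvable_iff K (L := R)).mp inferInstance
    rw [LieIdeal.derivedSeries_eq_bot_iff] at hk
    refine (LieAlgebra.isSolvable_iff K (L := J)).mpr ⟨k + 1, ?_⟩
    rw [LieIdeal.derivedSeries_eq_bot_iff, LieAlgebra.derivedSeriesOfIdeal_add, eq_bot_iff, ← hk]
    exact LieAlgebra.derivedSeriesOfIdeal_mono h1 k
  have hJR : J ≤ R := (LieAlgebra.LieIdeal.solvable_iff_le_radical K L J).mp hsol
  rw [eq_bot_iff]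
  intro a ha
  obtain ⟨a, rfl⟩ := qmk_surj R a
  exact (LieSubmodule.mem_bot _).mpr ((qmk_zero R a).mpr (hJR ((hJ a).mpr ha)))

lemma toral_of {Q : Type*} [LieRing Q] [LieAlgebra K Q]
    (h : ∀ x : Q, (LieAlgebra.ad K Q x).IsSemisimple) : IsToral K Q := by
  intro x p hp
  obtain ⟨q, hq, hpq⟩ := Module.End.isSemisimple_iff.mp (h x) p (fun y hy => hp y hy)
  exact ⟨q, fun y hy => hq hy, hpq⟩

lemma perfect_of (hL : IsPluperfect K L) : LieAlgebra.derivedSeries K L 1 = ⊤ := by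
  apply hL
  intro x p _
  obtain ⟨q, hq⟩ := Submodule.exists_isCompl p
  refine ⟨q, ?_, hq⟩
  intro y _
  obtain ⟨x, rfl⟩ := qmk_surj _ x
  obtain ⟨y, rfl⟩ := qmk_surj _ y
  have : ⁅qmk (LieAlgebra.derivedSeries K L 1) x, qmk (LieAlgebra.derivedSeries K L 1) y⁆ = 0 := by
    rw [← LieHom.map_lie, qmk_zero, LieAlgebra.derivedSeries_def,
      LieAlgebra.derivedSeriesOfIdeal_succ, LieAlgebra.derivedSeriesOfIdeal_zero]
    exact LieSubmodule.lie_mem_lie (LieSubmodule.mem_top x) (LieSubmodule.mem_top y)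
  rw [this]
  exact q.zero_mem

lemma exists_triple (hL : IsPluperfect K L) (I : LieIdeal K L) (hI : I ≠ ⊤) :
    ∃ e f : L, e ∉ I ∧ ⁅⁅e, f⁆, e⁆ = (2:K) • e ∧ ⁅⁅e, f⁆, f⁆ = -((2:K) • f) := by
  set R := LieAlgebra.radical K L with hR
  set T : LieIdeal K L := R ⊔ I with hT
  have hTt : T ≠ ⊤ := by
    intro h
    apply hI
    obtain ⟨k, hk⟩ := (LieAlgebra.isSolvable_iff K (L := R)).mp inferInstance
    rw [LieIdeal.derivedSeries_eq_bot_iff] at hk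
    have h1 := LieAlgebra.derivedSeriesOfIdeal_add_le_add (R := K) (I := R) I k 0
    have h2 : (R + I : LieIdeal K L) = ⊤ := h
    have h3 := LieIdeal.derivedSeries_eq_top k (perfect_of hL)
    rw [LieAlgebra.derivedSeries_def] at h3
    rw [h2, hk, add_zero, h3, LieAlgebra.derivedSeriesOfIdeal_zero] at h1
    have h4 : (⊥ + I : LieIdeal K L) = I := bot_sup_eq I
    rw [h4] at h1
    exact eq_top_iff.mpr h1
  have hnt : ¬ IsToral K (L ⧸ T) := fun h => hTt (hL T h)
  have : ¬ ∀ x : L ⧸ T, (LieAlgebra.ad K (L ⧸ T) x).IsSemisimple := fun h => hnt (toral_of h)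
  push Not at this
  obtain ⟨x, hx⟩ := this
  obtain ⟨x, rfl⟩ := qmk_surj T x
  haveI := quot_radical (K := K) (L := L)
  obtain ⟨y, z, hxyz, hy, hz⟩ := jordan (K := K) (qmk R x)
  obtain ⟨f, hf⟩ := jm y hy
  obtain ⟨y, rfl⟩ := qmk_surj R y
  obtain ⟨z, rfl⟩ := qmk_surj R z
  obtain ⟨f, rfl⟩ := qmk_surj R f
  have hyT : y ∉ T := by
    intro hyT
    apply hx
    have hxz : qmk T x = qmk T z := by
      rw [← sub_eq_zero, ← map_sub, qmk_zero]
      have h1 : x - (y + z) ∈ R := by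
        rw [← qmk_zero, map_sub, map_add, hxyz, sub_self]
      have h2 : x - z = (x - (y + z)) + y := by abel
      rw [h2]
      exact T.add_mem (le_sup_left (a := R) (b := I) h1) hyT
    rw [hxz]
    have hker : LinearMap.ker (qmk R : L →ₗ[K] L ⧸ R) ≤ LinearMap.ker (qmk T : L →ₗ[K] L ⧸ T) := by
      intro v hv
      exact (qmk_zero T v).mpr (le_sup_left (a := R) (b := I) ((qmk_zero R v).mp hv))
    let φ : (L ⧸ R) →ₗ[K] (L ⧸ T) := Submodule.liftQ (R : Submodule K L) (qmk T : L →ₗ[K] L ⧸ T)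
      (fun v hv => (qmk_zero T v).mpr (le_sup_left (a := R) (b := I) hv))
    have hφ : ∀ v, φ (qmk R v) = qmk T v := fun v => rfl
    refine ss_of_surj φ ?_ (LieAlgebra.ad K (L ⧸ R) (qmk R z)) _ ?_ hz
    · intro v
      obtain ⟨v, rfl⟩ := qmk_surj T v
      exact ⟨qmk R v, hφ v⟩
    · intro v
      obtain ⟨v, rfl⟩ := qmk_surj R v
      rw [LieAlgebra.ad_apply, LieAlgebra.ad_apply, ← LieHom.map_lie, hφ, hφ, LieHom.map_lie]
  obtain ⟨e, f', h1, h2, h3⟩ := lift_solvable R y f (by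
    rw [← qmk_zero, map_sub, map_smul, LieHom.map_lie, LieHom.map_lie, hf, sub_self])
  refine ⟨e, f', ?_, h2, h3⟩
  intro he
  apply hyT
  have : y = e - (e - y) := by abel
  rw [this]
  exact T.sub_mem (le_sup_right (a := R) (b := I) he) (le_sup_left (a := R) (b := I) h1)
end Exist
section Final
variable {K L : Type*} [Field K] [CharZero K] [LieRing L] [LieAlgebra K L] [FiniteDimensional K L]

def inSpan (K L : Type*) [Field K] [LieRing L] [LieAlgebra K L] : Submodule K L :=
  Submodule.span K {y : L | IsInertial K y}

lemma mem_inSpan (x y : L) (c : K) (hc : c ≠ 0) (h : ⁅x, y⁆ = c • y) : y ∈ inSpan K L := by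
  by_cases hy : y = 0
  · rw [hy]; exact Submodule.zero_mem _
  · exact Submodule.subset_span ⟨hy, x, c, hc, h⟩

lemma weight_add (h a b : L) (j k : K) (ha : ⁅h, a⁆ = j • a) (hb : ⁅h, b⁆ = k • b) :
    ⁅h, ⁅a, b⁆⁆ = (j + k) • ⁅a, b⁆ := by
  rw [leibniz_lie, ha, hb, smul_lie, lie_smul, add_smul]

lemma lie_mem_inSpan (h a b : L) (k : K) (hk : k ≠ 0) (ha : ⁅h, a⁆ = k • a)
    (hb : ⁅h, b⁆ = -k • b) : ⁅a, b⁆ ∈ inSpan K L := by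
  set A := LieAlgebra.ad K L a with hA
  have hnil : IsNilpotent A := by
    apply pl_nilp (H := (2 / k) • LieAlgebra.ad K L h)
    intro v
    simp only [LinearMap.smul_apply, hA, LieAlgebra.ad_apply]
    rw [leibniz_lie, ha, smul_lie, lie_smul, smul_add, smul_smul, div_mul_cancel₀ _ hk, add_comm]
  have hwt : ∀ j : ℕ, ⁅h, (A ^ j) b⁆ = (((j:K) - 1) * k) • (A ^ j) b := by
    intro j
    induction j with
    | zero => simp [hb]
    | succ j ih =>
      rw [pow_succ', Module.End.mul_apply]
      have := weight_add h a ((A ^ j) b) _ _ ha ih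
      rw [hA, LieAlgebra.ad_apply, ← hA, this]
      congr 1
      push_cast
      ring
  let w : ℕ → L := fun N => ∑ j ∈ Finset.range N, ((j.factorial : K)⁻¹) • (A ^ j) b
  have hw : ∀ N, ⁅h - k • a, w (N+1)⁆ = -k • w (N+1) - (k * (N.factorial : K)⁻¹) • (A ^ (N+1)) b := by
    intro N
    induction N with
    | zero =>
      simp only [w, zero_add, Finset.sum_range_one, Nat.factorial_zero, Nat.cast_one, inv_one,
        pow_zero, one_smul, Module.End.one_apply, pow_one, mul_one]
      rw [sub_lie, hb, smul_lie, hA, LieAlgebra.ad_apply]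
    | succ N ih =>
      have hs : w (N+1+1) = w (N+1) + (((N+1).factorial : K)⁻¹) • (A ^ (N+1)) b :=
        Finset.sum_range_succ _ _
      have hAA : ⁅a, (A ^ (N+1)) b⁆ = (A ^ (N+1+1)) b := by
        rw [pow_succ' A (N+1), Module.End.mul_apply, hA, LieAlgebra.ad_apply]
      rw [hs, lie_add, ih, lie_smul, sub_lie, hwt, smul_lie, hAA]
      have hf : (N.factorial : K) ≠ 0 := by exact_mod_cast N.factorial_ne_zero
      have hn : ((N:K) + 1) ≠ 0 := by exact_mod_cast N.succ_ne_zero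
      have e1 : (N.factorial : K)⁻¹ = ((N+1).factorial : K)⁻¹ * ((N:K)+1) := by
        rw [Nat.factorial_succ]; push_cast; field_simp
      rw [e1]
      push_cast
      module
  have hv : ∀ N, w (N+2) - ⁅a, b⁆ ∈ inSpan K L := by
    intro N
    induction N with
    | zero =>
      have : w (0+2) - ⁅a, b⁆ = b := by
        simp [w, Finset.sum_range_succ, hA]
      rw [this]
      exact mem_inSpan h b (-k) (neg_ne_zero.mpr hk) hb
    | succ N ih =>
      have hs : w (N+2+1) = w (N+2) + (((N+2).factorial : K)⁻¹) • (A ^ (N+2)) b :=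
        Finset.sum_range_succ _ _
      have : w (N+1+2) - ⁅a, b⁆ = (w (N+2) - ⁅a, b⁆) + (((N+2).factorial : K)⁻¹) • (A ^ (N+2)) b := by
        rw [show N+1+2 = N+2+1 by ring, hs]; abel
      rw [this]
      refine Submodule.add_mem _ ih (Submodule.smul_mem _ _ (mem_inSpan h _ _ ?_ (hwt (N+2))))
      refine mul_ne_zero ?_ hk
      have : ((N+2 : ℕ) : K) - 1 = ((N+1 : ℕ) : K) := by push_cast; ring
      rw [this]
      exact_mod_cast N.succ_ne_zero
  obtain ⟨N, hN⟩ := hnil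
  have h1 : w (N+2) ∈ inSpan K L := by
    apply mem_inSpan (h - k • a) _ (-k) (neg_ne_zero.mpr hk)
    rw [hw (N+1), show N+1+1 = N+2 from rfl, pow_add A N 2, hN]
    simp
  have := Submodule.sub_mem _ h1 (hv N)
  simpa using this

lemma exists_ideal (e f : L) (he : ⁅⁅e, f⁆, e⁆ = (2:K) • e) (hf : ⁅⁅e, f⁆, f⁆ = -((2:K) • f)) :
    ∃ W : LieIdeal K L, e ∈ W ∧ LieSubmodule.toSubmodule W ≤ inSpan K L := by
  set h := ⁅e, f⁆ with hh
  have hspan : Submodule.span K {v : L | ∃ k : K, ⁅h, v⁆ = k • v} = ⊤ := by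
    refine eig_span (E := LieAlgebra.ad K L e) (G := LieAlgebra.ad K L f)
      (H := LieAlgebra.ad K L h) ?_ ?_ ?_
    · intro v
      simp only [LieAlgebra.ad_apply]
      rw [leibniz_lie h e v, he, smul_lie, add_comm]
    · intro v
      simp only [LieAlgebra.ad_apply]
      rw [leibniz_lie e f v, add_comm]
    · intro v
      simp only [LieAlgebra.ad_apply]
      rw [leibniz_lie h f v, hf, neg_lie, smul_lie]; abel
  set S : Set L := {v | ∃ k : K, k ≠ 0 ∧ ⁅h, v⁆ = k • v} ∪
    {v | ∃ (k : K) (a b : L), k ≠ 0 ∧ ⁅h, a⁆ = k • a ∧ ⁅h, b⁆ = -k • b ∧ v = ⁅a, b⁆} with hS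
  have hle : Submodule.span K S ≤ inSpan K L := by
    rw [Submodule.span_le]
    rintro v (⟨k, hk, hv⟩ | ⟨k, a, b, hk, ha, hb, rfl⟩)
    · exact mem_inSpan h v k hk hv
    · exact lie_mem_inSpan h a b k hk ha hb
  have h1 : ∀ (j k : K) (x m : L), ⁅h, x⁆ = j • x → k ≠ 0 → ⁅h, m⁆ = k • m →
      ⁅x, m⁆ ∈ Submodule.span K S := by
    intro j k x m hx hk hm
    apply Submodule.subset_span
    by_cases hjk : j + k = 0
    · right
      have hj : j = -k := eq_neg_of_add_eq_zero_left hjk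
      exact ⟨j, x, m, by rw [hj]; exact neg_ne_zero.mpr hk, hx, by rw [hj, neg_neg]; exact hm, rfl⟩
    · left
      exact ⟨j + k, hjk, weight_add h x m j k hx hm⟩
  have h2 : ∀ (x : L), (∃ j : K, ⁅h, x⁆ = j • x) → ∀ m ∈ S, ⁅x, m⁆ ∈ Submodule.span K S := by
    rintro x ⟨j, hx⟩ m (⟨k, hk, hm⟩ | ⟨k, a, b, hk, ha, hb, rfl⟩)
    · exact h1 j k x m hx hk hm
    · by_cases hj : j = 0
      · subst hj
        have hxa := weight_add h x a _ _ hx ha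
        have hxb := weight_add h x b _ _ hx hb
        rw [leibniz_lie]
        exact Submodule.add_mem _ (h1 _ _ _ _ hxa (neg_ne_zero.mpr hk) hb)
          (h1 _ _ _ _ ha (by rw [zero_add]; exact neg_ne_zero.mpr hk) hxb)
      · apply Submodule.subset_span
        left
        refine ⟨j, hj, ?_⟩
        have := weight_add h x ⁅a, b⁆ _ _ hx (weight_add h a b _ _ ha hb)
        rw [this]
        congr 1
        ring
  have h3 : ∀ (x m : L), m ∈ Submodule.span K S → ⁅x, m⁆ ∈ Submodule.span K S := by
    intro x m hm
    have hx : x ∈ Submodule.span K {v : L | ∃ k : K, ⁅h, v⁆ = k • v} := by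
      rw [hspan]; exact Submodule.mem_top
    induction hx using Submodule.span_induction with
    | mem x hx =>
      induction hm using Submodule.span_induction with
      | mem m hm => exact h2 x hx m hm
      | zero => rw [lie_zero]; exact Submodule.zero_mem _
      | add m n _ _ hm hn => rw [lie_add]; exact Submodule.add_mem _ hm hn
      | smul t m _ hm => rw [lie_smul]; exact Submodule.smul_mem _ _ hm
    | zero => rw [zero_lie]; exact Submodule.zero_mem _
    | add x y _ _ hx hy => rw [add_lie]; exact Submodule.add_mem _ hx hy
    | smul t x _ hx => rw [smul_lie]; exact Submodule.smul_mem _ _ hx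
  let W : LieIdeal K L :=
    { Submodule.span K S with
      lie_mem := fun {x m} hm => h3 x m hm }
  refine ⟨W, ?_, hle⟩
  exact Submodule.subset_span (Or.inl ⟨2, two_ne_zero, he⟩)

lemma inSpan_top (hL : IsPluperfect K L) : inSpan K L = ⊤ := by
  set I : LieIdeal K L := sSup {J : LieIdeal K L | LieSubmodule.toSubmodule J ≤ inSpan K L} with hI
  have hIle : LieSubmodule.toSubmodule I ≤ inSpan K L := by
    rw [hI, LieSubmodule.sSup_toSubmodule]
    apply sSup_le
    rintro _ ⟨J, hJ, rfl⟩
    exact hJ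
  have hIt : I = ⊤ := by
    by_contra hne
    obtain ⟨e, f, he, h1, h2⟩ := exists_triple hL I hne
    obtain ⟨W, heW, hW⟩ := exists_ideal e f h1 h2
    exact he ((le_sSup (show W ∈ {J : LieIdeal K L | LieSubmodule.toSubmodule J ≤ inSpan K L} from hW)) heW)
  rw [eq_top_iff]
  intro x _
  apply hIle
  rw [hIt]
  exact Submodule.mem_top
end Final

/-- In characteristic zero, a finite-dimensional pluperfect Lie algebra is inertially
generated. -/
theorem stmt_9 (F L : Type*) [Field F] [CharZero F] [LieRing L] [LieAlgebra F L]
    [FiniteDimensional F L] (hL : IsPluperfect F L) :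
    InertiallyGenerated F L := by
  have htop := inSpan_top hL
  obtain ⟨s, hs, hspan, hli⟩ := exists_linearIndependent F {y : L | IsInertial F y}
  have hsp : ⊤ ≤ Submodule.span F (Set.range ((↑) : s → L)) := by
    rw [Subtype.range_coe, hspan]
    exact htop.ge
  let b := Module.Basis.mk hli hsp
  haveI : Finite s := Module.Finite.finite_basis b
  refine ⟨Nat.card s, b.reindex (Finite.equivFin s), fun i => ?_⟩
  rw [Module.Basis.reindex_apply, Module.Basis.mk_apply]
  exact hs (Subtype.mem _)
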